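/- arXiv:2505.22384 — 2 statements merged into one kernel-verified Lean document; each statement's English description precedes it below -/
import Mathlib

section
/- Let G be a finite simple graph (every edge has weight 1), U a vertex cover of G, I = V(G) ∖ U, 𝒞 ≥ 1, and t = |U| · 𝒞 + 𝒞. Let H be the bipartite graph with vertex classes U × {1, …, t} and I in which (u, ℓ) is adjacent to y ∈ I if and only if uy is an edge of G. Let M be a maximum matching of H and suppose w ∈ I is not covered by M. Then the maximum value of a 𝒞-partition of G equals the maximum value of a 𝒞-partition of the induced subgraph G − w obtained by deleting the vertex w. -/
open scoped Classical

/-- The number of edges of `G` with both endpoints in `Q` (unweighted value of a part). -/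
noncomputable def partVal {V : Type*} [DecidableEq V] (G : SimpleGraph V)
    (Q : Finset V) : ℕ :=
  (Q.sym2.filter (fun e => e ∈ G.edgeSet)).card

/-- The (unweighted) value of a partition `P`: the number of edges of `G` with
both endpoints in a common part of `P`. -/
noncomputable def pVal {V : Type*} [Fintype V] [DecidableEq V] (G : SimpleGraph V)
    (P : Finpartition (Finset.univ : Finset V)) : ℕ :=
  ∑ Q ∈ P.parts, partVal G Q


noncomputable def prs {W α : Type*} [Fintype W] (G : SimpleGraph W) (f : W → α) : ℕ :=
  ((Finset.univ : Finset (W × W)).filter (fun p => G.Adj p.1 p.2 ∧ f p.1 = f p.2)).card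

lemma two_partVal {W : Type*} [Fintype W] [DecidableEq W] (G : SimpleGraph W) (Q : Finset W) :
    2 * partVal G Q =
      ((Finset.univ : Finset (W × W)).filter
        (fun p => G.Adj p.1 p.2 ∧ p.1 ∈ Q ∧ p.2 ∈ Q)).card := by
  unfold partVal
  rw [Finset.card_eq_sum_card_fiberwise (f := fun p : W × W => s(p.1, p.2))
    (t := Q.sym2.filter (fun e => e ∈ G.edgeSet))]
  · rw [Finset.sum_const_nat (m := 2)]
    · ring
    intro e he
    induction e using Sym2.ind with
    | _ a b =>
    simp only [Finset.mem_filter, Finset.mk_mem_sym2_iff, SimpleGraph.mem_edgeSet] at he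
    have hne : a ≠ b := he.2.ne
    have : (Finset.filter (fun p : W × W => s(p.1, p.2) = s(a, b))
        (Finset.univ.filter (fun p : W × W => G.Adj p.1 p.2 ∧ p.1 ∈ Q ∧ p.2 ∈ Q)))
        = {(a, b), (b, a)} := by
      ext ⟨x, y⟩
      simp only [Finset.mem_filter, Finset.mem_univ, true_and, Sym2.eq_iff, Finset.mem_insert,
        Finset.mem_singleton, Prod.mk.injEq]
      constructor
      · exact fun h => h.2
      · rintro (⟨rfl, rfl⟩ | ⟨rfl, rfl⟩)
        · exact ⟨⟨he.2, he.1⟩, Or.inl ⟨rfl, rfl⟩⟩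
        · exact ⟨⟨he.2.symm, he.1.symm⟩, Or.inr ⟨rfl, rfl⟩⟩
    rw [this, Finset.card_pair]
    simp [hne]
  · rintro ⟨x, y⟩ h
    simp at h ⊢
    exact ⟨h.2, h.1⟩

lemma two_pVal {W : Type*} [Fintype W] [DecidableEq W] (G : SimpleGraph W)
    (P : Finpartition (Finset.univ : Finset W)) : 2 * pVal G P = prs G P.part := by
  unfold pVal prs
  rw [Finset.mul_sum, Finset.card_eq_sum_card_fiberwise (f := fun p : W × W => P.part p.1)
    (t := P.parts)]
  · refine Finset.sum_congr rfl fun Q hQ => ?_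
    rw [two_partVal, Finset.filter_filter]
    congr 1
    ext ⟨x, y⟩
    simp only [Finset.mem_filter, Finset.mem_univ, true_and]
    have h1 : ∀ z, z ∈ Q ↔ P.part z = Q := fun z =>
      ⟨fun h => P.part_eq_of_mem hQ h, fun h => h ▸ P.mem_part (Finset.mem_univ z)⟩
    rw [h1, h1]
    grind
  · rintro ⟨x, y⟩ h
    simp

lemma toFun_bound {W : Type*} [Fintype W] [DecidableEq W] (C : ℕ)
    (P : Finpartition (Finset.univ : Finset W)) (hP : ∀ Q ∈ P.parts, Q.card ≤ C) (a : Finset W) :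
    ((Finset.univ : Finset W).filter (fun y => P.part y = a)).card ≤ C := by
  rcases Finset.eq_empty_or_nonempty
    ((Finset.univ : Finset W).filter (fun y => P.part y = a)) with h | ⟨x, hx⟩
  · rw [h]; simp
  · simp only [Finset.mem_filter, Finset.mem_univ, true_and] at hx
    have ha : a ∈ P.parts := by rw [← hx]; simp
    refine le_trans (Finset.card_le_card ?_) (hP a ha)
    intro y hy
    simp only [Finset.mem_filter, Finset.mem_univ, true_and] at hy
    rw [← hy]; exact P.mem_part (Finset.mem_univ y)

lemma ofFun {W α : Type*} [Fintype W] [DecidableEq W] (G : SimpleGraph W) (C : ℕ) (f : W → α)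
    (hf : ∀ a, ((Finset.univ : Finset W).filter (fun y => f y = a)).card ≤ C) :
    ∃ P : Finpartition (Finset.univ : Finset W),
      (∀ Q ∈ P.parts, Q.card ≤ C) ∧ 2 * pVal G P = prs G f := by
  have key : ∀ x y, (Finpartition.ofSetoid (Setoid.ker f)).part x =
      (Finpartition.ofSetoid (Setoid.ker f)).part y ↔ f x = f y := by
    intro x y
    rw [eq_comm, ← Finpartition.mem_part_iff_part_eq_part _ (Finset.mem_univ _) (Finset.mem_univ _),
      Finpartition.mem_part_ofSetoid_iff_rel, Setoid.ker_def]
  refine ⟨Finpartition.ofSetoid (Setoid.ker f), ?_, ?_⟩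
  · intro Q hQ
    obtain ⟨x, hx⟩ := Finpartition.nonempty_of_mem_parts _ hQ
    refine le_trans (Finset.card_le_card ?_) (hf (f x))
    intro y hy
    simp only [Finset.mem_filter, Finset.mem_univ, true_and]
    rw [← key, Finpartition.part_eq_of_mem _ hQ hx, Finpartition.part_eq_of_mem _ hQ hy]
  · rw [two_pVal]
    unfold prs
    simp only [key]

/-- `m` gives disjoint stars centred at the vertices of `U'`. -/
def Stars {V : Type*} (G : SimpleGraph V) (C : ℕ) (w : V) (U' : Finset V)
    (m : V → Finset V) : Prop :=
  (∀ x, G.Adj w x → x ∈ U') ∧ w ∉ U' ∧ ∀ u ∈ U', (m u).card = C - 1 ∧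
    ∀ y ∈ m u, G.Adj u y ∧ y ≠ w ∧ y ∉ U' ∧ (∀ x, G.Adj y x → x ∈ U') ∧
      ∀ u' ∈ U', y ∈ m u' → u = u'

noncomputable def prs2 {V α : Type*} [Fintype V] [DecidableEq V] (G : SimpleGraph V) (w : V)
    (g : V → α) : ℕ :=
  ((Finset.univ : Finset (V × V)).filter
        (fun p => G.Adj p.1 p.2 ∧ g p.1 = g p.2 ∧ p.1 ≠ w ∧ p.2 ≠ w)).card

lemma prs_subtype {V α : Type*} [Fintype V] [DecidableEq V] (G : SimpleGraph V) (w : V)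
    [Fintype {x : V // x ≠ w}] (g : V → α) :
    prs (W := {x : V // x ≠ w}) (G.induce {x : V | x ≠ w}) (fun x => g x.1) =
      prs2 G w g := by
  unfold prs prs2
  refine Finset.card_bij (fun p _ => (p.1.1, p.2.1)) ?_ ?_ ?_
  · rintro ⟨⟨x, hx⟩, ⟨y, hy⟩⟩ h
    simp at h hx hy ⊢
    exact ⟨h.1, h.2, hx, hy⟩
  · rintro ⟨⟨x, hx⟩, ⟨y, hy⟩⟩ h ⟨⟨x', hx'⟩, ⟨y', hy'⟩⟩ h' e
    simpa using e
  · rintro ⟨x, y⟩ h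
    simp at h
    exact ⟨(⟨x, h.2.2.1⟩, ⟨y, h.2.2.2⟩), by simp [h.1, h.2.1], rfl⟩

lemma rebuild {V α : Type*} [Fintype V] [DecidableEq V] (G : SimpleGraph V) (C : ℕ) (hC : 1 ≤ C)
    (w : V) (U' : Finset V) (m : V → Finset V) (hm : Stars G C w U' m) (f : V → α)
    (hf : ∀ a, ((Finset.univ : Finset V).filter (fun y => f y = a)).card ≤ C) :
    ∃ g : V → V ⊕ α, (∀ a, ((Finset.univ : Finset V).filter (fun y => g y = a)).card ≤ C) ∧
      prs G f ≤ prs2 G w g := by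
  obtain ⟨hw, hwU, hs⟩ := hm
  let g : V → V ⊕ α := fun x => if x ∈ U' then Sum.inl x else
    if h : ∃ u ∈ U', x ∈ m u then Sum.inl h.choose else Sum.inr (f x)
  have g1 : ∀ x ∈ U', g x = Sum.inl x := fun x hx => by simp only [g, if_pos hx]
  have g2 : ∀ u ∈ U', ∀ x ∈ m u, g x = Sum.inl u := by
    intro u hu x hx
    have hxU := ((hs u hu).2 x hx).2.2.1
    have h : ∃ u ∈ U', x ∈ m u := ⟨u, hu, hx⟩
    simp only [g, if_neg hxU, dif_pos h]
    rw [((hs u hu).2 x hx).2.2.2.2 _ h.choose_spec.1 h.choose_spec.2]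
  have g3 : ∀ x, x ∉ U' → (¬ ∃ u ∈ U', x ∈ m u) → g x = Sum.inr (f x) := by
    intro x h1 h2
    simp only [g, if_neg h1, dif_neg h2]
  refine ⟨g, ?_, ?_⟩
  · rintro (u | a)
    · refine le_trans (Finset.card_le_card (t := if u ∈ U' then insert u (m u) else ∅) ?_) ?_
      · intro x hx
        simp only [Finset.mem_filter, Finset.mem_univ, true_and] at hx
        by_cases h1 : x ∈ U'
        · rw [g1 x h1] at hx
          cases hx
          simp [h1]
        · by_cases h2 : ∃ u ∈ U', x ∈ m u
          · obtain ⟨v, hv, hxv⟩ := h2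
            rw [g2 v hv x hxv] at hx
            cases hx
            simp [hv, hxv]
          · rw [g3 x h1 h2] at hx
            cases hx
      · split_ifs with hu
        · have := Finset.card_insert_le u (m u)
          have := (hs u hu).1
          omega
        · simp
    · refine le_trans (Finset.card_le_card ?_) (hf a)
      intro x hx
      simp only [Finset.mem_filter, Finset.mem_univ, true_and] at hx ⊢
      by_cases h1 : x ∈ U'
      · rw [g1 x h1] at hx
        cases hx
      · by_cases h2 : ∃ u ∈ U', x ∈ m u
        · obtain ⟨v, hv, hxv⟩ := h2
          rw [g2 v hv x hxv] at hx
          cases hx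
        · rw [g3 x h1 h2] at hx
          cases hx; rfl
  · let O0 : Finset (V × V) := Finset.univ.filter
      (fun p => (G.Adj p.1 p.2 ∧ f p.1 = f p.2) ∧ p.1 ∉ U' ∧ p.2 ∉ U')
    let O1 : Finset (V × V) := U'.biUnion fun u =>
      (Finset.univ.filter (fun y => G.Adj u y ∧ f y = f u)).image (fun y => (u, y))
    let L : Finset (V × V) := U'.biUnion fun u => (m u).image (fun y => (u, y))
    have hO1 : O1.card ≤ U'.card * (C - 1) := by
      refine Finset.card_biUnion_le_card_mul _ _ _ fun u hu => ?_
      refine Finset.card_image_le.trans ?_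
      have h1 : (Finset.univ.filter (fun y => G.Adj u y ∧ f y = f u)) ⊆
          (Finset.univ.filter (fun y => f y = f u)).erase u := by
        intro y hy
        simp only [Finset.mem_filter, Finset.mem_univ, true_and, Finset.mem_erase] at hy ⊢
        exact ⟨hy.1.ne', hy.2⟩
      have h2 := Finset.card_le_card h1
      rw [Finset.card_erase_of_mem (by simp)] at h2
      have := hf (f u)
      omega
    have hL : L.card = U'.card * (C - 1) := by
      rw [Finset.card_biUnion]
      · rw [Finset.sum_const_nat]
        intro u hu
        rw [Finset.card_image_of_injective _ (fun a b h => by simpa using h), (hs u hu).1]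
      · intro u hu v hv huv
        change Disjoint _ _
        rw [Finset.disjoint_left]
        intro p hp hq
        simp only [Finset.mem_image] at hp hq
        obtain ⟨a, _, rfl⟩ := hp
        obtain ⟨b, _, hb⟩ := hq
        simp only [Prod.mk.injEq] at hb
        exact huv hb.1.symm
    have memL : ∀ p, p ∈ L ↔ p.1 ∈ U' ∧ p.2 ∈ m p.1 := by
      rintro ⟨a, b⟩
      simp only [L, Finset.mem_biUnion, Finset.mem_image, Prod.mk.injEq]
      constructor
      · rintro ⟨u, hu, y, hy, rfl, rfl⟩; exact ⟨hu, hy⟩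
      · rintro ⟨h1, h2⟩; exact ⟨a, h1, b, h2, rfl, rfl⟩
    have memO1 : ∀ p, p ∈ O1 ↔ p.1 ∈ U' ∧ G.Adj p.1 p.2 ∧ f p.2 = f p.1 := by
      rintro ⟨a, b⟩
      simp only [O1, Finset.mem_biUnion, Finset.mem_image, Prod.mk.injEq, Finset.mem_filter,
        Finset.mem_univ, true_and]
      constructor
      · rintro ⟨u, hu, y, hy, rfl, rfl⟩; exact ⟨hu, hy⟩
      · rintro ⟨h1, h2⟩; exact ⟨a, h1, b, h2, rfl, rfl⟩
    have hupper : prs G f ≤ O0.card + O1.card + O1.card := by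
      have hsub : (Finset.univ.filter (fun p : V × V => G.Adj p.1 p.2 ∧ f p.1 = f p.2)) ⊆
          (O0 ∪ O1) ∪ O1.image Prod.swap := by
        rintro ⟨x, y⟩ h
        simp only [Finset.mem_filter, Finset.mem_univ, true_and] at h
        simp only [Finset.mem_union]
        by_cases hx : x ∈ U'
        · left; right; rw [memO1]; exact ⟨hx, h.1, h.2.symm⟩
        · by_cases hy : y ∈ U'
          · right
            rw [Finset.mem_image]
            exact ⟨(y, x), by rw [memO1]; exact ⟨hy, h.1.symm, h.2⟩, rfl⟩
          · left; left
            simp only [O0, Finset.mem_filter, Finset.mem_univ, true_and]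
            exact ⟨h, hx, hy⟩
      have h1 := Finset.card_le_card hsub
      have h2 := Finset.card_union_le (O0 ∪ O1) (O1.image Prod.swap)
      have h3 := Finset.card_union_le O0 O1
      have h4 : (O1.image Prod.swap).card ≤ O1.card := Finset.card_image_le
      unfold prs
      omega
    have hlower : O0.card + L.card + L.card ≤ prs2 G w g := by
      have hsw : (L.image Prod.swap).card = L.card :=
        Finset.card_image_of_injective _ Prod.swap_injective
      have memS : ∀ p, p ∈ L.image Prod.swap ↔ p.2 ∈ U' ∧ p.1 ∈ m p.2 := by
        rintro ⟨a, b⟩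
        rw [Finset.mem_image]
        constructor
        · rintro ⟨⟨c, d⟩, h, e⟩
          cases e
          exact (memL _).1 h
        · intro h
          exact ⟨(b, a), (memL _).2 h, rfl⟩
      have d1 : Disjoint O0 L := by
        rw [Finset.disjoint_left]
        intro p h h'
        rw [memL] at h'
        simp only [O0, Finset.mem_filter] at h
        exact h.2.2.1 h'.1
      have d2 : Disjoint (O0 ∪ L) (L.image Prod.swap) := by
        rw [Finset.disjoint_left]
        intro p h h'
        rw [memS] at h'
        rw [Finset.mem_union, memL] at h
        rcases h with h | h
        · simp only [O0, Finset.mem_filter] at h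
          exact h.2.2.2 h'.1
        · exact ((hs _ h.1).2 _ h.2).2.2.1 h'.1
      rw [← Finset.card_union_of_disjoint d1]
      nth_rewrite 1 [← hsw]
      rw [← Finset.card_union_of_disjoint d2]
      apply Finset.card_le_card
      rintro ⟨x, y⟩ h
      simp only [Finset.mem_filter, Finset.mem_univ, true_and]
      rw [Finset.mem_union, Finset.mem_union, memS, memL] at h
      rcases h with (h | h) | h
      · simp only [O0, Finset.mem_filter, Finset.mem_univ, true_and] at h
        obtain ⟨⟨ha, he⟩, hx, hy⟩ := h
        have hx2 : ¬ ∃ u ∈ U', x ∈ m u := by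
          rintro ⟨u, hu, hxu⟩
          exact hy (((hs u hu).2 x hxu).2.2.2.1 y ha)
        have hy2 : ¬ ∃ u ∈ U', y ∈ m u := by
          rintro ⟨u, hu, hyu⟩
          exact hx (((hs u hu).2 y hyu).2.2.2.1 x ha.symm)
        refine ⟨ha, by rw [g3 x hx hx2, g3 y hy hy2, he], ?_, ?_⟩
        · rintro rfl; exact hy (hw _ ha)
        · rintro rfl; exact hx (hw _ ha.symm)
      · obtain ⟨h1, h2⟩ := h
        have h3 := (hs _ h1).2 _ h2
        refine ⟨h3.1, by rw [g1 _ h1, g2 _ h1 _ h2], ?_, h3.2.1⟩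
        rintro rfl; exact hwU h1
      · obtain ⟨h1, h2⟩ := h
        have h3 := (hs _ h1).2 _ h2
        refine ⟨h3.1.symm, by rw [g1 _ h1, g2 _ h1 _ h2], h3.2.1, ?_⟩
        rintro rfl; exact hwU h1
    omega

lemma exists_stars {V : Type*} [Fintype V] [DecidableEq V] (G : SimpleGraph V)
    (C : ℕ)
    (U : Finset V) (hU : ∀ u v : V, G.Adj u v → u ∈ U ∨ v ∈ U)
    (t : ℕ) (ht : t = U.card * C + C)
    (H : SimpleGraph ((V × Fin t) ⊕ V))
    (hH : ∀ a b : (V × Fin t) ⊕ V, H.Adj a b ↔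
      ∃ u ∈ U, ∃ ℓ : Fin t, ∃ y ∈ Finset.univ \ U, G.Adj u y ∧
        ((a = Sum.inl (u, ℓ) ∧ b = Sum.inr y) ∨ (a = Sum.inr y ∧ b = Sum.inl (u, ℓ))))
    (M : Finset (Sym2 ((V × Fin t) ⊕ V)))
    (hMedges : ∀ e ∈ M, e ∈ H.edgeSet)
    (hMdisj : ∀ e ∈ M, ∀ f ∈ M, e ≠ f → ∀ x, x ∈ e → x ∉ f)
    (hMmax : ∀ M' : Finset (Sym2 ((V × Fin t) ⊕ V)),
      (∀ e ∈ M', e ∈ H.edgeSet) →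
      (∀ e ∈ M', ∀ f ∈ M', e ≠ f → ∀ x, x ∈ e → x ∉ f) → M'.card ≤ M.card)
    (w : V) (hw : w ∉ U) (hwM : ∀ e ∈ M, (Sum.inr w : (V × Fin t) ⊕ V) ∉ e) :
    ∃ U' m, Stars G C w U' m := by
  have hadj : ∀ u ℓ y, H.Adj (Sum.inl (u, ℓ)) (Sum.inr y) ↔ u ∈ U ∧ y ∉ U ∧ G.Adj u y := by
    intro u ℓ y
    rw [hH]
    constructor
    · rintro ⟨u', hu', ℓ', y', hy', ha, (⟨h1, h2⟩ | ⟨h1, h2⟩)⟩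
      · cases h1; cases h2
        exact ⟨hu', by simpa using hy', ha⟩
      · cases h1
    · rintro ⟨h1, h2, h3⟩
      exact ⟨u, h1, ℓ, y, by simpa using h2, h3, Or.inl ⟨rfl, rfl⟩⟩
  -- neighbourhoods
  let nb : V → Finset (V × Fin t) := fun y =>
    Finset.univ.filter (fun p => H.Adj (Sum.inl p) (Sum.inr y))
  let I : Finset V := Finset.univ \ U
  obtain ⟨S, hSI, hS⟩ := Finset.exists_max_image I.powerset
    (fun S => (S.card : ℤ) - (S.biUnion nb).card) ⟨∅, by simp⟩
  rw [Finset.mem_powerset] at hSI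
  have hd0 : 0 ≤ (S.card : ℤ) - (S.biUnion nb).card := by
    have := hS ∅ (by simp)
    simpa using this
  obtain ⟨d, hd⟩ := Int.eq_ofNat_of_zero_le hd0
  have hS' : ∀ T ⊆ I, T.card ≤ (T.biUnion nb).card + d := by
    intro T hT
    have := hS T (by simpa using hT)
    omega
  -- large matching by Hall
  have hlarge : I.card ≤ M.card + d := by
    let nb' : I → Finset ((V × Fin t) ⊕ Fin d) := fun y => (nb y.1).disjSum Finset.univ
    have hall : ∀ s : Finset I, s.card ≤ (s.biUnion nb').card := by
      intro s
      rcases s.eq_empty_or_nonempty with rfl | ⟨x, hx⟩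
      · simp
      have h1 : s.biUnion nb' = ((s.image Subtype.val).biUnion nb).disjSum Finset.univ := by
        ext (p | i)
        · simp [nb']
        · simp only [nb', Finset.mem_biUnion, Finset.inr_mem_disjSum, Finset.mem_univ, and_true,
            iff_true]
          exact ⟨x, hx⟩
      rw [h1, Finset.card_disjSum, Finset.card_univ, Fintype.card_fin]
      have := hS' (s.image Subtype.val) (by
        intro y hy
        rw [Finset.mem_image] at hy
        obtain ⟨z, _, rfl⟩ := hy
        exact z.2)
      rwa [Finset.card_image_of_injective _ Subtype.val_injective] at this
    obtain ⟨φ, hφ, hφm⟩ := (Finset.all_card_le_biUnion_card_iff_exists_injective nb').1 hall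
    let MP : Finset ((V × Fin t) × V) := Finset.univ.filter
      (fun p => ∃ h : p.2 ∈ I, φ ⟨p.2, h⟩ = Sum.inl p.1)
    have hinj : Function.Injective
        (fun p : (V × Fin t) × V => (s(Sum.inl p.1, Sum.inr p.2) : Sym2 ((V × Fin t) ⊕ V))) := by
      rintro ⟨a, b⟩ ⟨c, d⟩ h
      simpa [Sym2.eq_iff] using h
    have hM' := hMmax (MP.image (fun p => s(Sum.inl p.1, Sum.inr p.2))) (by
        intro e he
        rw [Finset.mem_image] at he
        obtain ⟨⟨p, y⟩, hp, rfl⟩ := he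
        simp only [MP, Finset.mem_filter, Finset.mem_univ, true_and] at hp
        obtain ⟨h, hp⟩ := hp
        have := hφm ⟨y, h⟩
        rw [hp] at this
        simpa [nb', nb] using this) (by
        intro e he e' he' hne x hx hx'
        rw [Finset.mem_image] at he he'
        obtain ⟨⟨p, y⟩, hp, rfl⟩ := he
        obtain ⟨⟨p', y'⟩, hp', rfl⟩ := he'
        simp only [MP, Finset.mem_filter, Finset.mem_univ, true_and] at hp hp'
        obtain ⟨h, hp⟩ := hp
        obtain ⟨h', hp'⟩ := hp'
        simp only [Sym2.mem_iff] at hx hx'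
        apply hne
        rcases hx with rfl | rfl
        · rcases hx' with hx' | hx'
          · cases hx'
            have := hφ (hp.trans hp'.symm)
            simp only [Subtype.mk.injEq] at this
            subst this; rfl
          · cases hx'
        · rcases hx' with hx' | hx'
          · cases hx'
          · cases hx'
            have := hp.symm.trans hp'
            cases this
            rfl)
    rw [Finset.card_image_of_injective _ hinj] at hM'
    have hcov : (Finset.univ : Finset I).image φ ⊆
        (MP.image Prod.fst).disjSum (Finset.univ : Finset (Fin d)) := by
      intro z hz
      rw [Finset.mem_image] at hz
      obtain ⟨y, -, rfl⟩ := hz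
      rcases hz : φ y with p | i
      · rw [Finset.inl_mem_disjSum, Finset.mem_image]
        refine ⟨(p, y.1), ?_, rfl⟩
        simp only [MP, Finset.mem_filter, Finset.mem_univ, true_and]
        exact ⟨y.2, hz⟩
      · simp
    have h1 := Finset.card_le_card hcov
    rw [Finset.card_image_of_injective _ hφ, Finset.card_disjSum, Finset.card_univ,
      Finset.card_univ, Fintype.card_fin, Fintype.card_coe] at h1
    have h2 : (MP.image Prod.fst).card ≤ MP.card := Finset.card_image_le
    omega
  -- pairs of M
  let MP : Finset ((V × Fin t) × V) := Finset.univ.filter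
    (fun p => (s(Sum.inl p.1, Sum.inr p.2) : Sym2 ((V × Fin t) ⊕ V)) ∈ M)
  have memMP : ∀ p, p ∈ MP ↔ (s(Sum.inl p.1, Sum.inr p.2) : Sym2 ((V × Fin t) ⊕ V)) ∈ M := by
    intro p; simp [MP]
  have hMPcard : M.card ≤ MP.card := by
    have : M ⊆ MP.image (fun p => s(Sum.inl p.1, Sum.inr p.2)) := by
      intro e he
      have h1 := hMedges e he
      induction e using Sym2.ind with
      | _ a b =>
      rw [SimpleGraph.mem_edgeSet, hH] at h1
      rw [Finset.mem_image]
      obtain ⟨u', hu', ℓ', y', hy', ha, (⟨rfl, rfl⟩ | ⟨rfl, rfl⟩)⟩ := h1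
      · exact ⟨((u', ℓ'), y'), (memMP _).2 he, rfl⟩
      · rw [Sym2.eq_swap] at he
        exact ⟨((u', ℓ'), y'), (memMP _).2 he, Sym2.eq_swap⟩
    exact (Finset.card_le_card this).trans Finset.card_image_le
  have hMPadj : ∀ p ∈ MP, H.Adj (Sum.inl p.1) (Sum.inr p.2) := by
    intro p hp
    have := hMedges _ ((memMP p).1 hp)
    simpa using this
  have hfst : ∀ p ∈ MP, ∀ q ∈ MP, p.1 = q.1 → p = q := by
    rintro ⟨p, y⟩ hp ⟨q, z⟩ hq h
    simp only at h
    subst h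
    rw [memMP] at hp hq
    by_contra hne
    refine hMdisj _ hp _ hq ?_ (Sum.inl p) (by simp) (by simp)
    intro h
    apply hne
    simpa [Sym2.eq_iff] using h
  have hsnd : ∀ p ∈ MP, ∀ q ∈ MP, p.2 = q.2 → p = q := by
    rintro ⟨p, y⟩ hp ⟨q, z⟩ hq h
    simp only at h
    subst h
    rw [memMP] at hp hq
    by_contra hne
    refine hMdisj _ hp _ hq ?_ (Sum.inr y) (by simp) (by simp)
    intro h
    apply hne
    simpa [Sym2.eq_iff] using h
  have hMw : ∀ p ∈ MP, p.2 ≠ w := by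
    rintro ⟨p, y⟩ hp rfl
    exact hwM _ ((memMP _).1 hp) (by simp)
  have hMI : ∀ p ∈ MP, p.2 ∈ I := by
    rintro ⟨⟨u, ℓ⟩, y⟩ hp
    have := ((hadj u ℓ y).1 (hMPadj _ hp)).2.1
    simpa [I] using this
  let MPS := MP.filter (fun p => p.2 ∈ S)
  have hsplit := Finset.card_filter_add_card_filter_not (s := MP) (fun p => p.2 ∈ S)
  have hMPS_sub : MPS.image Prod.fst ⊆ S.biUnion nb := by
    intro z hz
    rw [Finset.mem_image] at hz
    obtain ⟨p, hp, rfl⟩ := hz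
    rw [Finset.mem_filter] at hp
    rw [Finset.mem_biUnion]
    exact ⟨p.2, hp.2, by simpa [nb] using hMPadj _ hp.1⟩
  have hMPS_card : (MPS.image Prod.fst).card = MPS.card := by
    apply Finset.card_image_of_injOn
    intro p hp q hq h
    exact hfst p (Finset.mem_filter.1 hp).1 q (Finset.mem_filter.1 hq).1 h
  have hle1 := Finset.card_le_card hMPS_sub
  have hrest : (MP.filter (fun p => ¬ p.2 ∈ S)).card ≤ ((I \ S).erase w).card := by
    rw [← Finset.card_image_of_injOn (f := Prod.snd) (s := MP.filter (fun p => ¬ p.2 ∈ S))]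
    · apply Finset.card_le_card
      intro z hz
      rw [Finset.mem_image] at hz
      obtain ⟨p, hp, rfl⟩ := hz
      rw [Finset.mem_filter] at hp
      rw [Finset.mem_erase, Finset.mem_sdiff]
      exact ⟨hMw p hp.1, hMI p hp.1, hp.2⟩
    · intro p hp q hq h
      exact hsnd p (Finset.mem_filter.1 hp).1 q (Finset.mem_filter.1 hq).1 h
  have hIS : (I \ S).card + S.card = I.card := Finset.card_sdiff_add_card_eq_card hSI
  have hMPSdef : (MP.filter (fun p => p.2 ∈ S)).card = MPS.card := rfl
  have hwS : w ∈ S := by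
    by_contra hwS
    have hwI : w ∈ I \ S := by simp [I, hw, hwS]
    rw [Finset.card_erase_of_mem hwI] at hrest
    have : 0 < (I \ S).card := Finset.card_pos.2 ⟨w, hwI⟩
    omega
  have hfull : MPS.image Prod.fst = S.biUnion nb := by
    apply Finset.eq_of_subset_of_card_le hMPS_sub
    have := Finset.card_erase_le (s := I \ S) (a := w)
    omega
  let U' : Finset V := U.filter (fun u => ∃ y ∈ S, G.Adj u y)
  have hSU : ∀ y ∈ S, y ∉ U := fun y hy => by
    have := hSI hy
    simpa [I] using this
  have hnb : ∀ y ∈ S, ∀ x, G.Adj y x → x ∈ U' := by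
    intro y hy x hx
    simp only [U', Finset.mem_filter]
    exact ⟨(hU y x hx).resolve_left (hSU y hy), y, hy, hx.symm⟩
  let mm : V → Finset V := fun u => (MPS.filter (fun p => p.1.1 = u)).image Prod.snd
  have hmm : ∀ u ∈ U', C - 1 ≤ (mm u).card := by
    intro u hu
    simp only [U', Finset.mem_filter] at hu
    obtain ⟨huU, y, hy, huy⟩ := hu
    have h1 : (mm u).card = (MPS.filter (fun p => p.1.1 = u)).card := by
      apply Finset.card_image_of_injOn
      intro p hp q hq h
      exact hsnd p (Finset.mem_filter.1 (Finset.mem_filter.1 hp).1).1 q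
        (Finset.mem_filter.1 (Finset.mem_filter.1 hq).1).1 h
    have h2 : (Finset.univ : Finset (Fin t)).image (fun ℓ => (u, ℓ)) ⊆
        (MPS.filter (fun p => p.1.1 = u)).image Prod.fst := by
      intro z hz
      rw [Finset.mem_image] at hz
      obtain ⟨ℓ, -, rfl⟩ := hz
      have : (u, ℓ) ∈ MPS.image Prod.fst := by
        rw [hfull, Finset.mem_biUnion]
        refine ⟨y, hy, ?_⟩
        simp only [nb, Finset.mem_filter, Finset.mem_univ, true_and]
        exact (hadj u ℓ y).2 ⟨huU, hSU y hy, huy⟩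
      rw [Finset.mem_image] at this ⊢
      obtain ⟨p, hp, hpe⟩ := this
      exact ⟨p, by rw [Finset.mem_filter]; exact ⟨hp, by rw [hpe]⟩, hpe⟩
    have h3 := (Finset.card_le_card h2).trans Finset.card_image_le
    rw [Finset.card_image_of_injective _ (fun a b h => by simpa using h), Finset.card_univ,
      Fintype.card_fin] at h3
    have : C ≤ t := by rw [ht]; exact Nat.le_add_left _ _
    omega
  have hex : ∀ u, ∃ r : Finset V, u ∈ U' → r ⊆ mm u ∧ r.card = C - 1 := by
    intro u
    by_cases hu : u ∈ U'
    · obtain ⟨r, h1, h2⟩ := Finset.exists_subset_card_eq (hmm u hu)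
      exact ⟨r, fun _ => ⟨h1, h2⟩⟩
    · exact ⟨∅, fun h => absurd h hu⟩
  choose m hm using hex
  have hmem : ∀ u, ∀ y ∈ mm u, ∃ ℓ, ((u, ℓ), y) ∈ MP ∧ y ∈ S := by
    intro u y hy
    simp only [mm, Finset.mem_image, Finset.mem_filter, MPS] at hy
    obtain ⟨⟨⟨v, ℓ⟩, z⟩, ⟨⟨h1, h2⟩, h3⟩, h4⟩ := hy
    simp only at h2 h3 h4
    subst h3; subst h4
    exact ⟨ℓ, h1, h2⟩
  refine ⟨U', m, hnb w hwS, fun h => hw (Finset.mem_filter.1 h).1, fun u hu => ⟨(hm u hu).2, ?_⟩⟩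
  intro y hy
  obtain ⟨ℓ, h1, h2⟩ := hmem u y ((hm u hu).1 hy)
  refine ⟨((hadj u ℓ y).1 (hMPadj _ h1)).2.2, hMw _ h1,
    fun h => hSU y h2 (Finset.mem_filter.1 h).1, hnb y h2, ?_⟩
  intro u' hu' hy'
  obtain ⟨ℓ', h1', -⟩ := hmem u' y ((hm u' hu').1 hy')
  have := hsnd _ h1 _ h1' rfl
  simp only [Prod.mk.injEq] at this
  exact this.1.1

lemma bdd_set {W : Type*} [Fintype W] [DecidableEq W] (G : SimpleGraph W) (C : ℕ) :
    BddAbove {v : ℕ | ∃ P : Finpartition (Finset.univ : Finset W),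
        (∀ Q ∈ P.parts, Q.card ≤ C) ∧ pVal G P = v} := by
  refine ⟨Fintype.card (W × W), ?_⟩
  rintro v ⟨P, -, rfl⟩
  have h := two_pVal G P
  have h2 : prs G P.part ≤ Fintype.card (W × W) := Finset.card_le_univ _
  omega

lemma nonempty_set {W : Type*} [Fintype W] [DecidableEq W] (G : SimpleGraph W) (C : ℕ)
    (hC : 1 ≤ C) :
    {v : ℕ | ∃ P : Finpartition (Finset.univ : Finset W),
        (∀ Q ∈ P.parts, Q.card ≤ C) ∧ pVal G P = v}.Nonempty := by
  obtain ⟨P, h1, -⟩ := ofFun G C (id : W → W) (by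
    intro a
    refine le_trans (Finset.card_le_card (t := {a}) ?_) (by simpa using hC)
    intro x hx
    simpa using hx)
  exact ⟨_, P, h1, rfl⟩

/-- Safeness of the reduction rule: deleting a vertex of `I = V ∖ U` left
unmatched by a maximum matching of the auxiliary bipartite graph `H` does not
change the maximum value of a 𝒞-partition. -/
theorem stmt4 {V : Type*} [Fintype V] [DecidableEq V] (G : SimpleGraph V)
    (C : ℕ) (hC : 1 ≤ C)
    (U : Finset V) (hU : ∀ u v : V, G.Adj u v → u ∈ U ∨ v ∈ U)
    (t : ℕ) (ht : t = U.card * C + C)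
    (H : SimpleGraph ((V × Fin t) ⊕ V))
    (hH : ∀ a b : (V × Fin t) ⊕ V, H.Adj a b ↔
      ∃ u ∈ U, ∃ ℓ : Fin t, ∃ y ∈ Finset.univ \ U, G.Adj u y ∧
        ((a = Sum.inl (u, ℓ) ∧ b = Sum.inr y) ∨ (a = Sum.inr y ∧ b = Sum.inl (u, ℓ))))
    (M : Finset (Sym2 ((V × Fin t) ⊕ V)))
    (hMedges : ∀ e ∈ M, e ∈ H.edgeSet)
    (hMdisj : ∀ e ∈ M, ∀ f ∈ M, e ≠ f → ∀ x, x ∈ e → x ∉ f)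
    (hMmax : ∀ M' : Finset (Sym2 ((V × Fin t) ⊕ V)),
      (∀ e ∈ M', e ∈ H.edgeSet) →
      (∀ e ∈ M', ∀ f ∈ M', e ≠ f → ∀ x, x ∈ e → x ∉ f) → M'.card ≤ M.card)
    (w : V) (hw : w ∉ U) (hwM : ∀ e ∈ M, (Sum.inr w : (V × Fin t) ⊕ V) ∉ e) :
    sSup {v : ℕ | ∃ P : Finpartition (Finset.univ : Finset V),
        (∀ Q ∈ P.parts, Q.card ≤ C) ∧ pVal G P = v} =
    sSup {v : ℕ | ∃ P : Finpartition (Finset.univ : Finset {x : V // x ≠ w}),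
        (∀ Q ∈ P.parts, Q.card ≤ C) ∧
        pVal (G.induce {x : V | x ≠ w}) P = v} := by
  obtain ⟨U', m, hm⟩ := exists_stars G C U hU t ht H hH M hMedges hMdisj hMmax w hw hwM
  apply le_antisymm
  · apply csSup_le (nonempty_set G C hC)
    rintro v ⟨P, hP, rfl⟩
    obtain ⟨g, hg, hle⟩ := rebuild G C hC w U' m hm P.part 
      (fun a => by convert toFun_bound C P hP a)
    obtain ⟨P', hP', hv⟩ := ofFun (G.induce {x : V | x ≠ w}) C (fun x => g x.1) (by
      intro a
      refine le_trans ?_ (hg a)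
      refine Finset.card_le_card_of_injOn Subtype.val ?_ Subtype.val_injective.injOn
      intro x hx
      simpa using hx)
    have h2 := two_pVal G P
    have h5 := hv.trans (prs_subtype G w g)
    refine le_trans ?_ (le_csSup (bdd_set _ C) ⟨P', hP', rfl⟩)
    omega
  · apply csSup_le (nonempty_set _ C hC)
    rintro v ⟨P, hP, rfl⟩
    let g : V → Option (Finset {x : V // x ≠ w}) := fun x =>
      if h : x ≠ w then some (P.part ⟨x, h⟩) else none
    have hg : ∀ x : {x : V // x ≠ w}, g x.1 = some (P.part x) := by
      rintro ⟨x, hx⟩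
      simp only [g, dif_pos hx]
    have hgw : g w = none := by simp [g]
    obtain ⟨P', hP', hv⟩ := ofFun G C g (by
      rintro (_ | a)
      · refine le_trans (Finset.card_le_card (t := {w}) ?_) (by simpa using hC)
        intro x hx
        simp only [Finset.mem_filter, Finset.mem_univ, true_and] at hx
        rw [Finset.mem_singleton]
        by_contra h
        rw [hg ⟨x, h⟩] at hx
        cases hx
      · refine le_trans (Finset.card_le_card (t := (Finset.univ.filter
          (fun y => P.part y = a)).image Subtype.val) ?_)
          (Finset.card_image_le.trans (toFun_bound C P hP a))
        intro x hx
        simp only [Finset.mem_filter, Finset.mem_univ, true_and] at hx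
        have h : x ≠ w := by
          rintro rfl
          rw [hgw] at hx
          cases hx
        rw [hg ⟨x, h⟩] at hx
        cases hx
        rw [Finset.mem_image]
        exact ⟨⟨x, h⟩, by simp, rfl⟩)
    have h2 := two_pVal (G.induce {x : V | x ≠ w}) P
    have h3 : prs (G.induce {x : V | x ≠ w}) P.part =
        prs (G.induce {x : V | x ≠ w}) (fun x => g x.1) := by
      unfold prs
      congr 1
      ext p
      simp only [Finset.mem_filter, hg, Option.some.injEq]
    have h5 := h2.trans (h3.trans (prs_subtype G w g))
    have h4 : prs2 G w g ≤ prs G g := by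
      apply Finset.card_le_card
      intro p hp
      simp only [Finset.mem_filter] at hp ⊢
      exact ⟨hp.1, hp.2.1, hp.2.2.1⟩
    refine le_trans ?_ (le_csSup (bdd_set _ C) ⟨P', hP', rfl⟩)
    omega
end

section
/- A finite simple graph G on n vertices admits a partition of its vertex set into parts each inducing a triangle (a clique on 3 vertices) if and only if G admits a 3-partition of value at least n. -/
open scoped Classical

theorem aux_sub {V : Type*} [DecidableEq V] (G : SimpleGraph V) (Q : Finset V) :
    Q.sym2.filter (fun e => e ∈ G.edgeSet) ⊆ Q.offDiag.image Sym2.mk.uncurry := by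
  intro e he
  induction e using Sym2.ind with
  | _ u v =>
    simp only [Finset.mem_filter, Finset.mk_mem_sym2_iff, SimpleGraph.mem_edgeSet] at he
    refine Finset.mem_image.2 ⟨(u, v), ?_, rfl⟩
    exact Finset.mem_offDiag.2 ⟨he.1.1, he.1.2, he.2.ne⟩

theorem aux_card {V : Type*} [DecidableEq V] (Q : Finset V) :
    (Q.offDiag.image Sym2.mk.uncurry).card = Q.card.choose 2 := by
  exact Sym2.card_image_offDiag Q

theorem aux_le {V : Type*} [DecidableEq V] (G : SimpleGraph V) (Q : Finset V) :
    partVal G Q ≤ Q.card.choose 2 := by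
  rw [← aux_card]
  exact Finset.card_le_card (aux_sub G Q)

theorem aux_eq {V : Type*} [DecidableEq V] (G : SimpleGraph V) (Q : Finset V) :
    partVal G Q = Q.card.choose 2 ↔ ∀ u ∈ Q, ∀ v ∈ Q, u ≠ v → G.Adj u v := by
  constructor
  · intro h u hu v hv huv
    have h2 := Finset.eq_of_subset_of_card_le (aux_sub G Q) (by
      rw [aux_card, ← h]; exact le_rfl)
    have : s(u, v) ∈ Q.offDiag.image Sym2.mk.uncurry :=
      Finset.mem_image.2 ⟨(u, v), Finset.mem_offDiag.2 ⟨hu, hv, huv⟩, rfl⟩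
    rw [← h2] at this
    exact (Finset.mem_filter.1 this).2
  · intro h
    refine le_antisymm (aux_le G Q) ?_
    rw [← aux_card]
    refine Finset.card_le_card ?_
    intro e he
    obtain ⟨⟨u, v⟩, huv, rfl⟩ := Finset.mem_image.1 he
    obtain ⟨hu, hv, hne⟩ := Finset.mem_offDiag.1 huv
    exact Finset.mem_filter.2 ⟨Finset.mk_mem_sym2_iff.2 ⟨hu, hv⟩, h u hu v hv hne⟩

theorem aux_num (c : ℕ) (h : c ≤ 3) : c.choose 2 ≤ c := by
  interval_cases c <;> decide

theorem aux_num_eq (c : ℕ) (h : c ≤ 3) (h0 : 0 < c) (h1 : c.choose 2 = c) : c = 3 := by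
  interval_cases c <;> simp_all

/-- A graph on `n` vertices admits a partition into triangles iff it admits a
3-partition of value at least `n`. -/
theorem stmt13 {V : Type*} [Fintype V] [DecidableEq V] (G : SimpleGraph V) :
    (∃ P : Finpartition (Finset.univ : Finset V),
      ∀ Q ∈ P.parts, Q.card = 3 ∧ ∀ u ∈ Q, ∀ v ∈ Q, u ≠ v → G.Adj u v) ↔
    (∃ P : Finpartition (Finset.univ : Finset V),
      (∀ Q ∈ P.parts, Q.card ≤ 3) ∧ Fintype.card V ≤ pVal G P) := by
  constructor
  · rintro ⟨P, hP⟩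
    refine ⟨P, fun Q hQ => (hP Q hQ).1.le, ?_⟩
    rw [← Finset.card_univ, ← P.sum_card_parts]
    refine Finset.sum_le_sum fun Q hQ => ?_
    rw [(aux_eq G Q).2 (hP Q hQ).2, (hP Q hQ).1]
    decide
  · rintro ⟨P, hP, hv⟩
    refine ⟨P, ?_⟩
    have hle : ∀ Q ∈ P.parts, partVal G Q ≤ Q.card := fun Q hQ =>
      (aux_le G Q).trans (aux_num _ (hP Q hQ))
    rw [← Finset.card_univ, ← P.sum_card_parts] at hv
    have heq := (Finset.sum_eq_sum_iff_of_le hle).1 (le_antisymm (Finset.sum_le_sum hle) hv)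
    intro Q hQ
    have h1 := heq Q hQ
    have h2 := aux_le G Q
    have h3 := aux_num _ (hP Q hQ)
    exact ⟨aux_num_eq _ (hP Q hQ) (P.nonempty_of_mem_parts hQ).card_pos (by omega),
      (aux_eq G Q).1 (by omega)⟩
end
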